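/- arXiv:2312.01063 — 9 statements merged into one kernel-verified Lean document; each statement's English description precedes it below -/
import Mathlib

section
/- For every pair of real numbers A, B, the polynomial τ = h_{A,B} satisfies the bilinear Boussinesq equation τ∂_x⁴τ − 4(∂_xτ)(∂_x³τ) + 3(∂_x²τ)² − τ∂_x²τ + (∂_xτ)² − τ∂_y²τ + (∂_yτ)² = 0 at every point of ℝ². -/
/-!
As a function of either variable alone, `h_{A,B}` and all its partial derivatives are polynomials of
degree at most six, so the formal derivative of a sextic (`deriv_sextic`) gives closed forms for the
partial derivatives. Substituting them turns the bilinear Boussinesq equation into a polynomial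
identity in `A, B, x, y`, which holds after expansion.
-/

/-- Partial derivative in the first (`x`) variable of a function `ℝ → ℝ → ℝ`. -/
noncomputable def pdx (f : ℝ → ℝ → ℝ) : ℝ → ℝ → ℝ := fun x y => deriv (fun t => f t y) x

/-- Partial derivative in the second (`y`) variable of a function `ℝ → ℝ → ℝ`. -/
noncomputable def pdy (f : ℝ → ℝ → ℝ) : ℝ → ℝ → ℝ := fun x y => deriv (fun t => f x t) y

/-- The degree-6 tau function `h_{A,B}` from the paper. -/
noncomputable def hAB (A B : ℝ) (x y : ℝ) : ℝ :=
  x^6 + 3*x^4*y^2 + 3*x^2*y^4 + y^6 + 25*x^4 + 90*x^2*y^2 + 17*y^4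
    + B*x^3 + 3*A*x^2*y - 3*B*x*y^2 - A*y^3 - 125*x^2 + 475*y^2
    - B*x + 5*A*y + 1875 + A^2/4 + B^2/4

theorem deriv_sextic (a b c d e f g x : ℝ) :
    deriv (fun t : ℝ => a + b*t + c*t^2 + d*t^3 + e*t^4 + f*t^5 + g*t^6) x
      = b + 2*c*x + 3*d*x^2 + 4*e*x^3 + 5*f*x^4 + 6*g*x^5 := by
  have hp (n : ℕ) (k : ℝ) : HasDerivAt (fun t : ℝ => k*t^n) (k*(n*x^(n-1))) x :=
    (hasDerivAt_pow n x).const_mul k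
  have h1 : HasDerivAt (fun t : ℝ => b*t) (b*1) x := (hasDerivAt_id x).const_mul b
  have h := ((((((hasDerivAt_const x a).add h1).add (hp 2 c)).add (hp 3 d)).add (hp 4 e)).add
    (hp 5 f)).add (hp 6 g)
  refine HasDerivAt.deriv (h.congr_deriv ?_)
  push_cast
  ring

/-- A function that is a sextic in `x`, with coefficients depending on `y`, has the formal partial
derivative in `x`. -/
theorem pdx_sextic (F : ℝ → ℝ → ℝ) (a b c d e f g : ℝ → ℝ)
    (hF : ∀ x y, F x y = a y + b y*x + c y*x^2 + d y*x^3 + e y*x^4 + f y*x^5 + g y*x^6) :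
    pdx F = fun x y => b y + 2*c y*x + 3*d y*x^2 + 4*e y*x^3 + 5*f y*x^4 + 6*g y*x^5 := by
  funext x y
  simp only [pdx, hF, deriv_sextic]

/-- A function that is a sextic in `y`, with coefficients depending on `x`, has the formal partial
derivative in `y`. -/
theorem pdy_sextic (F : ℝ → ℝ → ℝ) (a b c d e f g : ℝ → ℝ)
    (hF : ∀ x y, F x y = a x + b x*y + c x*y^2 + d x*y^3 + e x*y^4 + f x*y^5 + g x*y^6) :
    pdy F = fun x y => b x + 2*c x*y + 3*d x*y^2 + 4*e x*y^3 + 5*f x*y^4 + 6*g x*y^5 := by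
  funext x y
  simp only [pdy, hF, deriv_sextic]

theorem pdx_hAB_1 (A B : ℝ) : pdx (hAB A B) = fun x y =>
      -3*B*y^2 - B
      + (2*(3*y^4 + 90*y^2 + 3*A*y - 125))*x
      + (3*B)*x^2
      + (4*(3*y^2 + 25))*x^3
      + 6*x^5 := by
  rw [pdx_sextic (hAB A B)
    (fun y => y^6 + 17*y^4 - A*y^3 + 475*y^2 + 5*A*y + 1875 + A^2/4 + B^2/4)
    (fun y => -3*B*y^2 - B)
    (fun y => 3*y^4 + 90*y^2 + 3*A*y - 125)
    (fun _ => B)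
    (fun y => 3*y^2 + 25)
    (fun _ => 0)
    (fun _ => 1)
    (fun x y => by rw [hAB]; ring)]
  funext x y
  ring

theorem pdx_hAB_2 (A B : ℝ) : pdx (pdx (hAB A B)) = fun x y =>
      2*(3*y^4 + 90*y^2 + 3*A*y - 125)
      + (6*B)*x
      + (12*(3*y^2 + 25))*x^2
      + 30*x^4 := by
  rw [pdx_hAB_1, pdx_sextic _
    (fun y => -3*B*y^2 - B)
    (fun y => 2*(3*y^4 + 90*y^2 + 3*A*y - 125))
    (fun _ => 3*B)
    (fun y => 4*(3*y^2 + 25))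
    (fun _ => 0)
    (fun _ => 6)
    (fun _ => 0)
    (fun x y => by ring)]
  funext x y
  ring

theorem pdx_hAB_3 (A B : ℝ) : pdx (pdx (pdx (hAB A B))) = fun x y =>
      6*B
      + (24*(3*y^2 + 25))*x
      + 120*x^3 := by
  rw [pdx_hAB_2, pdx_sextic _
    (fun y => 2*(3*y^4 + 90*y^2 + 3*A*y - 125))
    (fun _ => 6*B)
    (fun y => 12*(3*y^2 + 25))
    (fun _ => 0)
    (fun _ => 30)
    (fun _ => 0)
    (fun _ => 0)
    (fun x y => by ring)]
  funext x y
  ring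

theorem pdx_hAB_4 (A B : ℝ) : pdx (pdx (pdx (pdx (hAB A B)))) = fun x y =>
      24*(3*y^2 + 25)
      + 360*x^2 := by
  rw [pdx_hAB_3, pdx_sextic _
    (fun _ => 6*B)
    (fun y => 24*(3*y^2 + 25))
    (fun _ => 0)
    (fun _ => 120)
    (fun _ => 0)
    (fun _ => 0)
    (fun _ => 0)
    (fun x y => by ring)]
  funext x y
  ring

theorem pdy_hAB_1 (A B : ℝ) : pdy (hAB A B) = fun x y =>
      3*A*x^2 + 5*A
      + (2*(3*x^4 + 90*x^2 - 3*B*x + 475))*y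
      + (3*(-A))*y^2
      + (4*(3*x^2 + 17))*y^3
      + 6*y^5 := by
  rw [pdy_sextic (hAB A B)
    (fun x => x^6 + 25*x^4 + B*x^3 - 125*x^2 - B*x + 1875 + A^2/4 + B^2/4)
    (fun x => 3*A*x^2 + 5*A)
    (fun x => 3*x^4 + 90*x^2 - 3*B*x + 475)
    (fun _ => -A)
    (fun x => 3*x^2 + 17)
    (fun _ => 0)
    (fun _ => 1)
    (fun x y => by rw [hAB]; ring)]
  funext x y
  ring

theorem pdy_hAB_2 (A B : ℝ) : pdy (pdy (hAB A B)) = fun x y =>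
      2*(3*x^4 + 90*x^2 - 3*B*x + 475)
      + (6*(-A))*y
      + (12*(3*x^2 + 17))*y^2
      + 30*y^4 := by
  rw [pdy_hAB_1, pdy_sextic _
    (fun x => 3*A*x^2 + 5*A)
    (fun x => 2*(3*x^4 + 90*x^2 - 3*B*x + 475))
    (fun _ => 3*(-A))
    (fun x => 4*(3*x^2 + 17))
    (fun _ => 0)
    (fun _ => 6)
    (fun _ => 0)
    (fun x y => by ring)]
  funext x y
  ring

/-- for all real `A, B`, the polynomial `τ = h_{A,B}` satisfies the bilinear
Boussinesq equation `τ∂ₓ⁴τ − 4(∂ₓτ)(∂ₓ³τ) + 3(∂ₓ²τ)² − τ∂ₓ²τ + (∂ₓτ)² − τ∂_y²τ + (∂_yτ)² = 0`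
at every point of `ℝ²`. -/
theorem hAB_bilinear (A B x y : ℝ) :
    hAB A B x y * pdx (pdx (pdx (pdx (hAB A B)))) x y
      - 4 * pdx (hAB A B) x y * pdx (pdx (pdx (hAB A B))) x y
      + 3 * (pdx (pdx (hAB A B)) x y)^2
      - hAB A B x y * pdx (pdx (hAB A B)) x y
      + (pdx (hAB A B) x y)^2
      - hAB A B x y * pdy (pdy (hAB A B)) x y
      + (pdy (hAB A B) x y)^2 = 0 := by
  rw [pdx_hAB_4, pdx_hAB_3, pdx_hAB_2, pdx_hAB_1, pdy_hAB_2, pdy_hAB_1, hAB]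
  ring
end

section
/- For every pair of real numbers A, B and every (x,y) ∈ ℝ², the polynomial h_{A,B} satisfies h_{A,B}(x,y) > 0. -/
/-- for all real `A, B` and all `(x,y) ∈ ℝ²`, `h_{A,B}(x,y) > 0`. -/
theorem hAB_pos (A B x y : ℝ) : 0 < hAB A B x y := by
  -- Complete the square in `A` and in `B`: the sextic terms `(x^2 + y^2)^3` are absorbed,
  -- leaving `27*x^4 - 126*x^2 + 1875 + 54*x^2*y^2 + 27*y^4 + 450*y^2`.
  have h : hAB A B x y = (A/2 + (3*x^2*y - y^3 + 5*y))^2 + (B/2 + (x^3 - 3*x*y^2 - x))^2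
      + 27*(x^2 - 7/3)^2 + 54*(x*y)^2 + 27*(y^2)^2 + 450*y^2 + 1728 := by
    unfold hAB
    ring
  rw [h]
  positivity
end

section
/- Let A, B be real numbers and suppose h_{A,B}(x,y) > 0 for all (x,y) ∈ ℝ². Then the smooth function u_{A,B} := 2∂_x² ln h_{A,B} satisfies the Boussinesq equation ∂_x²(∂_x²u − u + 3u²) − ∂_y²u = 0 at every point of ℝ². -/
/-- The solution `u_{A,B} = 2 ∂ₓ² ln h_{A,B}`. -/
noncomputable def uAB (A B : ℝ) : ℝ → ℝ → ℝ :=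
  fun x y => 2 * pdx (pdx (fun s t => Real.log (hAB A B s t))) x y

open scoped ContDiff

/-! ### Partial derivatives of smooth functions -/

/-- Joint smoothness of a function of two real variables in curried form. -/
def Smooth2 (f : ℝ → ℝ → ℝ) : Prop := ContDiff ℝ ∞ (fun p : ℝ × ℝ => f p.1 p.2)

lemma Smooth2.pdx_eq {f : ℝ → ℝ → ℝ} (hf : Smooth2 f) (x y : ℝ) :
    pdx f x y = fderiv ℝ (fun p : ℝ × ℝ => f p.1 p.2) (x, y) (1, 0) := by
  have h1 : HasFDerivAt (fun p : ℝ × ℝ => f p.1 p.2) _ (x, y) :=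
    (hf.differentiable (by simp) (x, y)).hasFDerivAt
  have h2 : HasDerivAt (fun t : ℝ => (t, y)) (1, 0) x :=
    (hasDerivAt_id x).prodMk (hasDerivAt_const x y)
  exact (h1.comp_hasDerivAt x h2).deriv

lemma Smooth2.pdy_eq {f : ℝ → ℝ → ℝ} (hf : Smooth2 f) (x y : ℝ) :
    pdy f x y = fderiv ℝ (fun p : ℝ × ℝ => f p.1 p.2) (x, y) (0, 1) := by
  have h1 : HasFDerivAt (fun p : ℝ × ℝ => f p.1 p.2) _ (x, y) :=
    (hf.differentiable (by simp) (x, y)).hasFDerivAt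
  have h2 : HasDerivAt (fun t : ℝ => (x, t)) (0, 1) y :=
    (hasDerivAt_const y x).prodMk (hasDerivAt_id y)
  exact (h1.comp_hasDerivAt y h2).deriv

lemma Smooth2.pdx {f : ℝ → ℝ → ℝ} (hf : Smooth2 f) : Smooth2 (pdx f) := by
  unfold Smooth2
  simp only [hf.pdx_eq]
  exact (ContDiff.fderiv_right (m := ∞) hf (by simp)).clm_apply contDiff_const

lemma Smooth2.pdy {f : ℝ → ℝ → ℝ} (hf : Smooth2 f) : Smooth2 (pdy f) := by
  unfold Smooth2
  simp only [hf.pdy_eq]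
  exact (ContDiff.fderiv_right (m := ∞) hf (by simp)).clm_apply contDiff_const

/-- Mixed partial derivatives commute, by symmetry of the second Fréchet derivative. -/
lemma Smooth2.pdx_pdy_comm {f : ℝ → ℝ → ℝ} (hf : Smooth2 f) :
    _root_.pdx (_root_.pdy f) = _root_.pdy (_root_.pdx f) := by
  funext x y
  have hd : Differentiable ℝ (fderiv ℝ (fun p : ℝ × ℝ => f p.1 p.2)) :=
    (ContDiff.fderiv_right (m := ∞) hf (by simp)).differentiable (by simp)
  have key : ∀ v w : ℝ × ℝ, fderiv ℝ (fun p => fderiv ℝ (fun p : ℝ × ℝ => f p.1 p.2) p v) (x, y) w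
      = fderiv ℝ (fderiv ℝ (fun p : ℝ × ℝ => f p.1 p.2)) (x, y) w v := by
    intro v w
    have := ((hd (x, y)).hasFDerivAt.clm_apply (hasFDerivAt_const v (x, y))).fderiv
    rw [this]
    simp
  rw [hf.pdy.pdx_eq, hf.pdx.pdy_eq]
  simp only [hf.pdx_eq, hf.pdy_eq, Prod.mk.eta]
  rw [key, key]
  exact (hf.contDiffAt.isSymmSndFDerivAt (by
    rw [minSmoothness_of_isRCLikeNormedField]
    exact WithTop.coe_le_coe.2 le_top)).eq _ _

lemma pdx_const_mul (c : ℝ) {f : ℝ → ℝ → ℝ} :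
    pdx (fun s t => c * f s t) = fun s t => c * pdx f s t := by
  funext x y
  exact deriv_const_mul_field c

lemma pdy_const_mul (c : ℝ) {f : ℝ → ℝ → ℝ} :
    pdy (fun s t => c * f s t) = fun s t => c * pdy f s t := by
  funext x y
  exact deriv_const_mul_field c

lemma pdx_eq_of_hasDerivAt {f g : ℝ → ℝ → ℝ}
    (h : ∀ x y, HasDerivAt (fun t => f t y) (g x y) x) : pdx f = g := by
  funext x y
  exact (h x y).deriv

lemma pdy_eq_of_hasDerivAt {f g : ℝ → ℝ → ℝ}
    (h : ∀ x y, HasDerivAt (fun t => f x t) (g x y) y) : pdy f = g := by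
  funext x y
  exact (h x y).deriv

section Derivatives

/-! ### Derivatives of the polynomial

The iterated partial derivatives of `h_{A,B}`: `hX1`, …, `hX4` in `x` and `hY1`, `hY2` in `y`. -/

/-- `∂ₓ h_{A,B}` -/
noncomputable def hX1 (A B x y : ℝ) : ℝ :=
  6*x^5 + 12*x^3*y^2 + 6*x*y^4 + 100*x^3 + 180*x*y^2
    + 3*B*x^2 + 6*A*x*y - 3*B*y^2 - 250*x - B

/-- `∂ₓ² h_{A,B}` -/
noncomputable def hX2 (A B x y : ℝ) : ℝ :=
  30*x^4 + 36*x^2*y^2 + 6*y^4 + 300*x^2 + 180*y^2 + 6*B*x + 6*A*y - 250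

/-- `∂ₓ³ h_{A,B}` -/
noncomputable def hX3 (B x y : ℝ) : ℝ := 120*x^3 + 72*x*y^2 + 600*x + 6*B

/-- `∂ₓ⁴ h_{A,B}` -/
noncomputable def hX4 (x y : ℝ) : ℝ := 360*x^2 + 72*y^2 + 600

/-- `∂_y h_{A,B}` -/
noncomputable def hY1 (A B x y : ℝ) : ℝ :=
  6*x^4*y + 12*x^2*y^3 + 6*y^5 + 180*x^2*y + 68*y^3
    + 3*A*x^2 - 6*B*x*y - 3*A*y^2 + 950*y + 5*A

/-- `∂_y² h_{A,B}` -/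
noncomputable def hY2 (A B x y : ℝ) : ℝ :=
  6*x^4 + 36*x^2*y^2 + 30*y^4 + 180*x^2 + 204*y^2 - 6*B*x - 6*A*y + 950

variable (A B x y : ℝ)

lemma hasDerivAt_hAB_x : HasDerivAt (fun t => hAB A B t y) (hX1 A B x y) x := by
  have h : DifferentiableAt ℝ (fun t => hAB A B t y) x := by unfold hAB; fun_prop
  refine h.hasDerivAt.congr_deriv ?_
  unfold hAB hX1
  simp (disch := fun_prop) [deriv_fun_add, deriv_fun_sub, deriv_fun_mul]
  ring

lemma hasDerivAt_hX1_x : HasDerivAt (fun t => hX1 A B t y) (hX2 A B x y) x := by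
  have h : DifferentiableAt ℝ (fun t => hX1 A B t y) x := by unfold hX1; fun_prop
  refine h.hasDerivAt.congr_deriv ?_
  unfold hX1 hX2
  simp (disch := fun_prop) [deriv_fun_add, deriv_fun_sub, deriv_fun_mul]
  ring

lemma hasDerivAt_hX2_x : HasDerivAt (fun t => hX2 A B t y) (hX3 B x y) x := by
  have h : DifferentiableAt ℝ (fun t => hX2 A B t y) x := by unfold hX2; fun_prop
  refine h.hasDerivAt.congr_deriv ?_
  unfold hX2 hX3
  simp (disch := fun_prop) [deriv_fun_add, deriv_fun_sub, deriv_fun_mul]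
  ring

lemma hasDerivAt_hX3_x : HasDerivAt (fun t => hX3 B t y) (hX4 x y) x := by
  have h : DifferentiableAt ℝ (fun t => hX3 B t y) x := by unfold hX3; fun_prop
  refine h.hasDerivAt.congr_deriv ?_
  unfold hX3 hX4
  simp (disch := fun_prop) [deriv_fun_add, deriv_fun_mul]
  ring

lemma hasDerivAt_hAB_y : HasDerivAt (fun t => hAB A B x t) (hY1 A B x y) y := by
  have h : DifferentiableAt ℝ (fun t => hAB A B x t) y := by unfold hAB; fun_prop
  refine h.hasDerivAt.congr_deriv ?_
  unfold hAB hY1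
  simp (disch := fun_prop) [deriv_fun_add, deriv_fun_sub, deriv_fun_mul]
  ring

lemma hasDerivAt_hY1_y : HasDerivAt (fun t => hY1 A B x t) (hY2 A B x y) y := by
  have h : DifferentiableAt ℝ (fun t => hY1 A B x t) y := by unfold hY1; fun_prop
  refine h.hasDerivAt.congr_deriv ?_
  unfold hY1 hY2
  simp (disch := fun_prop) [deriv_fun_add, deriv_fun_sub, deriv_fun_mul]
  ring

end Derivatives

/-- Hirota's bilinear equation `½ (D_x⁴ − D_x² − D_y²) h·h = 0` for `h = h_{A,B}`. -/
lemma hirota_hAB (A B x y : ℝ) :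
    hAB A B x y * hX4 x y - 4 * hX1 A B x y * hX3 B x y + 3 * hX2 A B x y ^ 2
      - (hAB A B x y * hX2 A B x y - hX1 A B x y ^ 2)
      - (hAB A B x y * hY2 A B x y - hY1 A B x y ^ 2) = 0 := by
  unfold hAB hX1 hX2 hX3 hX4 hY1 hY2
  ring

/-- If `p' = q` and `h' = h₁`, then `(p / h)' = q / h - (p / h) (h₁ / h)`. Together with the product
rule this differentiates polynomials in the ratios `(∂ⁱh) / h`. -/
lemma hasDerivAt_ratio {p h : ℝ → ℝ} {q h₁ x : ℝ} (hp : HasDerivAt p q x)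
    (hh : HasDerivAt h h₁ x) (h0 : h x ≠ 0) :
    HasDerivAt (fun t => p t / h t) (q / h x - p x / h x * (h₁ / h x)) x := by
  refine (hp.fun_div hh h0).congr_deriv ?_
  field_simp

section LogDerivatives

/-! ### Derivatives of the logarithm and the integrated equation -/

variable {A B : ℝ}

lemma pdx_log (hpos : ∀ x y : ℝ, 0 < hAB A B x y) :
    pdx (fun s t => Real.log (hAB A B s t))
    = fun x y => hX1 A B x y / hAB A B x y :=
  pdx_eq_of_hasDerivAt fun x y => (hasDerivAt_hAB_x A B x y).log (hpos x y).ne'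

lemma pdx2_log (hpos : ∀ x y : ℝ, 0 < hAB A B x y) :
    pdx (pdx (fun s t => Real.log (hAB A B s t)))
    = fun x y => hX2 A B x y / hAB A B x y - (hX1 A B x y / hAB A B x y) ^ 2 := by
  rw [pdx_log hpos]
  refine pdx_eq_of_hasDerivAt fun x y => ?_
  refine HasDerivAt.congr_deriv (
    hasDerivAt_ratio (hasDerivAt_hX1_x A B x y) (hasDerivAt_hAB_x A B x y)
    (hpos x y).ne') ?_
  ring

lemma pdx3_log (hpos : ∀ x y : ℝ, 0 < hAB A B x y) :
    pdx (pdx (pdx (fun s t => Real.log (hAB A B s t))))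
    = fun x y => hX3 B x y / hAB A B x y
      - 3 * (hX1 A B x y / hAB A B x y) * (hX2 A B x y / hAB A B x y)
      + 2 * (hX1 A B x y / hAB A B x y) ^ 3 := by
  rw [pdx2_log hpos]
  refine pdx_eq_of_hasDerivAt fun x y => ?_
  have h0 := hasDerivAt_hAB_x A B x y
  have r1 := hasDerivAt_ratio (hasDerivAt_hX1_x A B x y) h0 (hpos x y).ne'
  have r2 := hasDerivAt_ratio (hasDerivAt_hX2_x A B x y) h0 (hpos x y).ne'
  refine HasDerivAt.congr_deriv (r2.fun_sub (r1.fun_pow 2)) ?_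
  ring

lemma pdx4_log (hpos : ∀ x y : ℝ, 0 < hAB A B x y) :
    pdx (pdx (pdx (pdx (fun s t => Real.log (hAB A B s t)))))
    = fun x y => hX4 x y / hAB A B x y
      - 4 * (hX1 A B x y / hAB A B x y) * (hX3 B x y / hAB A B x y)
      - 3 * (hX2 A B x y / hAB A B x y) ^ 2
      + 12 * (hX1 A B x y / hAB A B x y) ^ 2 * (hX2 A B x y / hAB A B x y)
      - 6 * (hX1 A B x y / hAB A B x y) ^ 4 := by
  rw [pdx3_log hpos]
  refine pdx_eq_of_hasDerivAt fun x y => ?_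
  have h0 := hasDerivAt_hAB_x A B x y
  have r1 := hasDerivAt_ratio (hasDerivAt_hX1_x A B x y) h0 (hpos x y).ne'
  have r2 := hasDerivAt_ratio (hasDerivAt_hX2_x A B x y) h0 (hpos x y).ne'
  have r3 := hasDerivAt_ratio (hasDerivAt_hX3_x B x y) h0 (hpos x y).ne'
  refine HasDerivAt.congr_deriv (
    (r3.fun_sub ((r1.const_mul 3).fun_mul r2)).fun_add
      ((r1.fun_pow 3).const_mul 2)) ?_
  ring

lemma pdy2_log (hpos : ∀ x y : ℝ, 0 < hAB A B x y) :
    pdy (pdy (fun s t => Real.log (hAB A B s t)))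
    = fun x y => hY2 A B x y / hAB A B x y - (hY1 A B x y / hAB A B x y) ^ 2 := by
  have h1 : pdy (fun s t => Real.log (hAB A B s t))
      = fun x y => hY1 A B x y / hAB A B x y :=
    pdy_eq_of_hasDerivAt fun x y => (hasDerivAt_hAB_y A B x y).log (hpos x y).ne'
  rw [h1]
  refine pdy_eq_of_hasDerivAt fun x y => ?_
  refine HasDerivAt.congr_deriv (
    hasDerivAt_ratio (hasDerivAt_hY1_y A B x y) (hasDerivAt_hAB_y A B x y)
    (hpos x y).ne') ?_
  ring

lemma smooth2_log (hpos : ∀ x y : ℝ, 0 < hAB A B x y) :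
    Smooth2 (fun s t => Real.log (hAB A B s t)) := by
  refine ContDiff.log ?_ fun p => (hpos p.1 p.2).ne'
  unfold hAB
  fun_prop

/-- The Boussinesq equation integrated twice in `x`: Hirota's bilinear equation divided by `h²`. -/
lemma boussinesq_potential (hpos : ∀ x y : ℝ, 0 < hAB A B x y) :
    (fun s t => pdx (pdx (uAB A B)) s t - uAB A B s t + 3 * (uAB A B s t) ^ 2)
      = fun s t => 2 * pdy (pdy (fun s t => Real.log (hAB A B s t))) s t := by
  have hu : pdx (pdx (uAB A B))
      = fun s t => 2 * pdx (pdx (pdx (pdx (fun s t => Real.log (hAB A B s t))))) s t := by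
    unfold uAB
    rw [pdx_const_mul, pdx_const_mul]
  funext x y
  rw [hu]
  unfold uAB
  rw [pdx4_log hpos, pdx2_log hpos, pdy2_log hpos]
  have h0 := (hpos x y).ne'
  field_simp
  linear_combination hAB A B x y ^ 2 * hirota_hAB A B x y

end LogDerivatives

theorem uAB_solves_boussinesq (A B : ℝ)
    (hpos : ∀ x y : ℝ, 0 < hAB A B x y) :
    ∀ x y : ℝ,
      pdx (pdx (fun s t =>
        pdx (pdx (uAB A B)) s t - uAB A B s t + 3 * (uAB A B s t)^2)) x y
        - pdy (pdy (uAB A B)) x y = 0 := by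
  intro x y
  have hL := smooth2_log hpos
  have hu : pdy (pdy (uAB A B))
      = fun s t => 2 * pdy (pdy (pdx (pdx (fun s t => Real.log (hAB A B s t))))) s t := by
    unfold uAB
    rw [pdy_const_mul, pdy_const_mul]
  -- it remains to move both `x`-derivatives past both `y`-derivatives
  rw [boussinesq_potential hpos, hu, pdx_const_mul, pdx_const_mul,
    hL.pdy.pdx_pdy_comm, hL.pdx_pdy_comm, hL.pdx.pdy.pdx_pdy_comm, hL.pdx.pdx_pdy_comm]
  exact sub_self _
end

section
/- Let k be a positive natural number, let n = k(k+1)/2, and let j be a natural number such that n(n−1) − 2nj + j(j−1) = 0 (as integers). Then j + n = k² or j + n = (k+1)². -/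
/-- if `n = k(k+1)/2` is a triangular number (`k ≥ 1`) and the natural number `j`
satisfies the degree-balancing relation `n(n−1) − 2nj + j(j−1) = 0` (as integers), then
`j + n = k²` or `j + n = (k+1)²`. -/
theorem degree_is_square (k n j : ℕ) (hk : 0 < k) (hn : n = k * (k + 1) / 2)
    (hrel : ((n : ℤ) * ((n : ℤ) - 1) - 2 * (n : ℤ) * (j : ℤ) + (j : ℤ) * ((j : ℤ) - 1)) = 0) :
    j + n = k ^ 2 ∨ j + n = (k + 1) ^ 2 := by
  have h2 : 2 * n = k * (k + 1) := by
    rw [hn]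
    exact Nat.mul_div_cancel' (Nat.even_mul_succ_self k).two_dvd
  have h2' : 2 * (n : ℤ) = k * (k + 1) := by exact_mod_cast h2
  -- The relation says `(n - j)² = n + j`, so `s = j + n` satisfies `s² - (4n + 1)s + (2n)² = 0`;
  -- with `2n = k(k+1)` the roots are `k²` and `(k+1)²`.
  have hfac : ((j : ℤ) + n - k ^ 2) * ((j : ℤ) + n - (k + 1) ^ 2) = 0 := by
    linear_combination hrel + (2 * ((j : ℤ) + n) - 2 * n - k * (k + 1)) * h2'
  rcases mul_eq_zero.mp hfac with h | h
  · left
    exact_mod_cast sub_eq_zero.mp h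
  · right
    exact_mod_cast sub_eq_zero.mp h
end

section
/- The classical lump U(x,y) = 4(y² − x² + 3)/(x² + y² + 3)² is a smooth function on ℝ² and satisfies the Boussinesq equation ∂_x²(∂_x²U − U + 3U²) − ∂_y²U = 0 at every point of ℝ². -/
/-- The classical lump solution `U(x,y) = 4(y² − x² + 3)/(x² + y² + 3)²`. -/
noncomputable def lump (x y : ℝ) : ℝ := 4 * (y^2 - x^2 + 3) / (x^2 + y^2 + 3)^2

/-- Quotient rule in the form that raises the power of `t² + c` by one only, rather than
doubling it. -/
theorem hasDerivAt_div_pow {P : ℝ → ℝ} {P' c t : ℝ} (n : ℕ) (hP : HasDerivAt P P' t)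
    (hQ : t^2 + c ≠ 0) :
    HasDerivAt (fun s => P s / (s^2 + c)^n)
      ((P' * (t^2 + c) - 2 * n * t * P t) / (t^2 + c)^(n + 1)) t := by
  have hq : HasDerivAt (fun s : ℝ => s^2 + c) (2 * t) t := by
    simpa using (hasDerivAt_pow 2 t).add_const c
  refine (hP.div (hq.pow n) (pow_ne_zero n hQ)).congr_deriv ?_
  cases n with
  | zero => simp [hQ]
  | succ m =>
    simp only [Nat.add_sub_cancel, Pi.pow_apply]
    field_simp
    ring

theorem lump_denom_pos (x y : ℝ) : 0 < x^2 + y^2 + 3 := by positivity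

theorem pdx_lump (x y : ℝ) :
    pdx lump x y = 8 * (x^3 - 3 * x * y^2 - 9 * x) / (x^2 + y^2 + 3)^3 := by
  have hP : HasDerivAt (fun t : ℝ => 4 * (y^2 - t^2 + 3)) (4 * (-(2 * x))) x := by
    simpa using ((((hasDerivAt_pow 2 x).const_sub (y^2)).add_const 3).const_mul 4)
  have h := (hasDerivAt_div_pow (c := y^2 + 3) 2 hP (by positivity)).deriv
  simp only [← add_assoc] at h
  refine h.trans ?_
  push_cast
  ring

theorem pdx_pdx_lump (x y : ℝ) :
    pdx (pdx lump) x y =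
      24 * ((x^2 - y^2 - 3) * (x^2 + y^2 + 3) - 2 * x^2 * (x^2 - 3 * y^2 - 9))
        / (x^2 + y^2 + 3)^4 := by
  have hP : HasDerivAt (fun t : ℝ => 8 * (t^3 - 3 * t * y^2 - 9 * t))
      (8 * (3 * x^2 - 3 * y^2 - 9)) x := by
    simpa using (((hasDerivAt_pow 3 x).sub
      (((hasDerivAt_id x).const_mul 3).mul_const (y^2))).sub
        ((hasDerivAt_id x).const_mul 9)).const_mul 8
  have h := (hasDerivAt_div_pow (c := y^2 + 3) 3 hP (by positivity)).deriv
  simp only [← add_assoc, ← pdx_lump] at h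
  refine h.trans ?_
  push_cast
  ring

theorem pdy_lump (x y : ℝ) :
    pdy lump x y = 8 * (3 * y * x^2 - y^3 - 3 * y) / (y^2 + x^2 + 3)^3 := by
  have hP : HasDerivAt (fun t : ℝ => 4 * (t^2 - x^2 + 3)) (4 * (2 * y)) y := by
    simpa using ((((hasDerivAt_pow 2 y).sub_const (x^2)).add_const 3).const_mul 4)
  have h := (hasDerivAt_div_pow (c := x^2 + 3) 2 hP (by positivity)).deriv
  have hl : (fun t => lump x t) = fun t => 4 * (t^2 - x^2 + 3) / (t^2 + (x^2 + 3))^2 := by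
    funext t
    rw [lump, add_comm (x^2) (t^2), add_assoc]
  rw [pdy, hl, h]
  push_cast
  ring

/-- The right-hand side is visibly symmetric in `x` and `y`. -/
theorem pdy_pdy_lump (x y : ℝ) :
    pdy (pdy lump) x y =
      24 * (x^4 + y^4 - 6 * x^2 * y^2 + 2 * x^2 + 2 * y^2 - 3) / (x^2 + y^2 + 3)^4 := by
  have hP : HasDerivAt (fun t : ℝ => 8 * (3 * t * x^2 - t^3 - 3 * t))
      (8 * (3 * x^2 - 3 * y^2 - 3)) y := by
    simpa using (((((hasDerivAt_id y).const_mul 3).mul_const (x^2)).sub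
      (hasDerivAt_pow 3 y)).sub ((hasDerivAt_id y).const_mul 3)).const_mul 8
  have h := (hasDerivAt_div_pow (c := x^2 + 3) 3 hP (by positivity)).deriv
  simp only [← add_assoc, ← pdy_lump] at h
  refine h.trans ?_
  push_cast
  ring

/-- The Boussinesq equation integrated twice in `x`: since `∂_y² (2 log Q) (x, y) = U(y, x)`, this
is the Hirota bilinear form of the equation divided by `Q²`. -/
theorem boussinesq_integrated (x y : ℝ) :
    pdx (pdx lump) x y - lump x y + 3 * (lump x y)^2 = lump y x := by
  have hQ := (lump_denom_pos x y).ne'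
  rw [pdx_pdx_lump, lump, lump, add_comm (y^2) (x^2)]
  field_simp
  ring

/-- the classical lump `U` is smooth on `ℝ²` and satisfies the Boussinesq
equation `∂ₓ²(∂ₓ²U − U + 3U²) − ∂_y²U = 0` at every point of `ℝ²`. -/
theorem lump_solves_boussinesq :
    ContDiff ℝ (⊤ : ℕ∞) (fun p : ℝ × ℝ => lump p.1 p.2) ∧
    ∀ x y : ℝ,
      pdx (pdx (fun s t => pdx (pdx lump) s t - lump s t + 3 * (lump s t)^2)) x y
        - pdy (pdy lump) x y = 0 := by
  refine ⟨?_, fun x y => ?_⟩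
  · unfold lump
    exact ContDiff.div (by fun_prop) (by fun_prop)
      fun p => pow_ne_zero 2 (lump_denom_pos p.1 p.2).ne'
  · simp only [boussinesq_integrated]
    -- Differentiating `(s, t) ↦ U(t, s)` in its first slot is differentiating `U` in its second.
    change pdy (pdy lump) y x - pdy (pdy lump) x y = 0
    rw [pdy_pdy_lump, pdy_pdy_lump]
    ring
end

section
/- For B > 0, let u_{0,B}(x,y) = 2[h_{0,B}(x,y)·∂_x²h_{0,B}(x,y) − (∂_x h_{0,B}(x,y))²]/h_{0,B}(x,y)², set γ = (B/2)^{1/3}, and let P₁ = (−γ, 0), P₂ = (γ/2, −√3 γ/2), P₃ = (γ/2, √3 γ/2). Then sup over (x,y) ∈ ℝ² of |u_{0,B}(x,y) − U((x,y) − P₁) − U((x,y) − P₂) − U((x,y) − P₃)| tends to 0 as B → +∞; that is, for every ε > 0 there exists B₀ such that for all B ≥ B₀ and all (x,y) ∈ ℝ², |u_{0,B}(x,y) − Σ_{j=1}^{3} U((x,y) − P_j)| ≤ ε. -/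
/-- The tau function `h_{0,B}`. -/
noncomputable def h0B (B : ℝ) (x y : ℝ) : ℝ :=
  x^6 + 3*x^4*y^2 + 3*x^2*y^4 + y^6 + 25*x^4 + 90*x^2*y^2 + 17*y^4
    + B*x^3 - 3*B*x*y^2 - 125*x^2 + 475*y^2 - B*x + 1875 + B^2/4

/-- The solution `u_{0,B} = 2(h∂ₓ²h − (∂ₓh)²)/h²`. -/
noncomputable def u0B (B : ℝ) (x y : ℝ) : ℝ :=
  2 * (h0B B x y * pdx (pdx (h0B B)) x y - (pdx (h0B B) x y)^2) / (h0B B x y)^2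

/-- The product `q₁ q₂ q₃` in expanded form: the tau function of the sum of the three lumps. -/
noncomputable def tauG (g x y : ℝ) : ℝ :=
  (x^3 - 3*x*y^2 + g^3)^2 + (3*x^2*y - y^3)^2
    + 9*((x^2+y^2)^2 + g^2*(x^2+y^2) + g^4) + 27*(x^2+y^2+g^2) + 27

/-- The difference `h_{0,B} - G` for `B = 2 γ³`. -/
noncomputable def tauE (g x y : ℝ) : ℝ :=
  16*x^4 + 72*x^2*y^2 + 8*y^4 - 2*g^3*x - 9*g^2*(x^2+y^2) - 9*g^4
    + (-152*x^2 + 448*y^2 - 27*g^2 + 1848)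

/-- `∂ₓ` of `tauE`. -/
noncomputable def tauE1 (g x y : ℝ) : ℝ :=
  64*x^3 + 144*x*y^2 - 2*g^3 - 18*g^2*x - 304*x

/-- `∂ₓ²` of `tauE`. -/
noncomputable def tauE2 (g x y : ℝ) : ℝ :=
  192*x^2 + 144*y^2 - 18*g^2 - 304

lemma pdx_h0B (B : ℝ) : pdx (h0B B) = fun x y =>
    6*x^5 + 12*x^3*y^2 + 6*x*y^4 + 100*x^3 + 180*x*y^2 + 3*B*x^2 - 3*B*y^2 - 250*x - B := by
  funext x y
  have hx := hasDerivAt_id' x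
  have h : HasDerivAt (fun t => h0B B t y) _ x :=
    ((((((((((((((hx.pow 6).add (((hx.pow 4).const_mul 3).mul_const (y^2))).add
      (((hx.pow 2).const_mul 3).mul_const (y^4))).add_const (y^6)).add
      ((hx.pow 4).const_mul 25)).add (((hx.pow 2).const_mul 90).mul_const (y^2))).add_const
      (17*y^4)).add ((hx.pow 3).const_mul B)).sub ((hx.const_mul (3*B)).mul_const (y^2))).sub
      ((hx.pow 2).const_mul 125)).add_const (475*y^2)).sub (hx.const_mul B)).add_const
      1875).add_const (B^2/4))
  unfold pdx
  rw [h.deriv]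
  push_cast
  ring

lemma pdx_pdx_h0B (B : ℝ) : pdx (pdx (h0B B)) = fun x y =>
    30*x^4 + 36*x^2*y^2 + 6*y^4 + 300*x^2 + 180*y^2 + 6*B*x - 250 := by
  rw [pdx_h0B]
  funext x y
  have hx := hasDerivAt_id' x
  have h : HasDerivAt (fun x => 6*x^5 + 12*x^3*y^2 + 6*x*y^4 + 100*x^3 + 180*x*y^2 + 3*B*x^2
      - 3*B*y^2 - 250*x - B) _ x :=
    (((((((((hx.pow 5).const_mul 6).add (((hx.pow 3).const_mul 12).mul_const (y^2))).add
      ((hx.const_mul 6).mul_const (y^4))).add ((hx.pow 3).const_mul 100)).add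
      ((hx.const_mul 180).mul_const (y^2))).add ((hx.pow 2).const_mul (3*B))).sub_const
      (3*B*y^2)).sub (hx.const_mul 250)).sub_const B
  unfold pdx
  rw [h.deriv]
  push_cast
  ring

/-- With `n = |z|² - γ²` and `v₁ = Re (z² + γ z̄)`, both `n²` and `v₁²` are controlled by `|z³ + γ³|²`. -/
lemma bound_n_v (g x y : ℝ) :
    (x^2+y^2+g^2) * (x^2+y^2-g^2)^2 ≤ (x^3 - 3*x*y^2 + g^3)^2 + (3*x^2*y - y^3)^2 ∧
    (x^2+y^2+g^2) * (x^2-y^2+g*x)^2 ≤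
      5 * ((x^3 - 3*x*y^2 + g^3)^2 + (3*x^2*y - y^3)^2) := by
  have key : (x^3 - 3*x*y^2 + g^3)^2 + (3*x^2*y - y^3)^2 =
      g^2 * ((x^2-y^2+g*x)^2 + (2*x*y-g*y)^2) + (x^2+y^2+g^2) * (x^2+y^2-g^2)^2 := by ring
  -- the squared modulus of `z v = w + γ n`, where `w = z³ + γ³`
  have key2 : (x^2+y^2) * ((x^2-y^2+g*x)^2 + (2*x*y-g*y)^2) =
      (x^3 - 3*x*y^2 + g^3 + g*(x^2+y^2-g^2))^2 + (3*x^2*y - y^3)^2 := by ring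
  have h1 : 0 ≤ g^2 * ((x^2-y^2+g*x)^2 + (2*x*y-g*y)^2) := by positivity
  have h2 : 0 ≤ (x^2+y^2) * (x^2+y^2-g^2)^2 := by positivity
  have h3 : 0 ≤ (x^2+y^2+g^2) * (2*x*y-g*y)^2 := by positivity
  refine ⟨by linarith, ?_⟩
  have h4 := sq_nonneg (x^3 - 3*x*y^2 + g^3 - g*(x^2+y^2-g^2))
  have h5 := sq_nonneg (3*x^2*y - y^3)
  nlinarith

lemma six_sq_le_tauG (g x y : ℝ) : 6 * (x^2+y^2+g^2)^2 ≤ tauG g x y := by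
  unfold tauG
  nlinarith [sq_nonneg (x^3 - 3*x*y^2 + g^3), sq_nonneg (3*x^2*y - y^3),
    sq_nonneg (x^2+y^2-g^2), sq_nonneg x, sq_nonneg y, sq_nonneg g,
    mul_nonneg (sq_nonneg g) (add_nonneg (sq_nonneg x) (sq_nonneg y))]

/-- The quartic part of `tauE` lies in the ideal generated by `n` and `v₁`, hence is `O(G / γ)`. -/
lemma bound_quartic (g x y : ℝ) (hg : 0 ≤ g) :
    g * |16*x^4 + 72*x^2*y^2 + 8*y^4 - 2*g^3*x - 9*g^2*(x^2+y^2) - 9*g^4| ≤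
      100 * tauG g x y := by
  obtain ⟨h1, h2⟩ := bound_n_v g x y
  have hp : 0 ≤ x^2+y^2+g^2 := by positivity
  have e : 16*x^4 + 72*x^2*y^2 + 8*y^4 - 2*g^3*x - 9*g^2*(x^2+y^2) - 9*g^4 =
      (x^2+y^2-g^2) * (24*(x^2+y^2) + 9*g^2 - 4*g*x) +
      (x^2-y^2+g*x) * (-8*x^2 + 16*y^2 + 12*g*x - 6*g^2) := by ring
  have a1 : |24*(x^2+y^2) + 9*g^2 - 4*g*x| ≤ 30*(x^2+y^2+g^2) := by
    rw [abs_le]; constructor <;> nlinarith [sq_nonneg (x-g), sq_nonneg (x+g), sq_nonneg y]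
  have a2 : |-8*x^2 + 16*y^2 + 12*g*x - 6*g^2| ≤ 30*(x^2+y^2+g^2) := by
    rw [abs_le]; constructor <;> nlinarith [sq_nonneg (x-g), sq_nonneg (x+g), sq_nonneg y]
  have a3 : |16*x^4 + 72*x^2*y^2 + 8*y^4 - 2*g^3*x - 9*g^2*(x^2+y^2) - 9*g^4| ≤
      (|x^2+y^2-g^2| + |x^2-y^2+g*x|) * (30*(x^2+y^2+g^2)) := by
    rw [e]
    refine (abs_add_le _ _).trans ?_
    rw [abs_mul, abs_mul, add_mul (|x^2+y^2-g^2|)]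
    gcongr
  have a4 : ∀ t : ℝ, g * ((x^2+y^2+g^2) * |t|) ≤
      ((x^2+y^2+g^2) * t^2 + g^2*(x^2+y^2+g^2)) / 2 := by
    intro t
    have := mul_nonneg hp (sq_nonneg (|t| - g))
    nlinarith [sq_abs t]
  have b1 := a4 (x^2+y^2-g^2)
  have b2 := a4 (x^2-y^2+g*x)
  have b3 : g^2*(x^2+y^2+g^2) * 9 + ((x^3 - 3*x*y^2 + g^3)^2 + (3*x^2*y - y^3)^2)
      ≤ tauG g x y := by
    unfold tauG
    nlinarith [sq_nonneg (x^2+y^2), sq_nonneg x, sq_nonneg y, sq_nonneg g]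
  have b4 : 0 ≤ g^2*(x^2+y^2+g^2) := by positivity
  have b5 := mul_le_mul_of_nonneg_left a3 hg
  nlinarith [sq_nonneg (x^3 - 3*x*y^2 + g^3), sq_nonneg (3*x^2*y - y^3)]

lemma bound_tauE (g x y : ℝ) (hg : 1 ≤ g) : g * |tauE g x y| ≤ 1000 * tauG g x y := by
  have h1 := bound_quartic g x y (by linarith)
  have h2 := six_sq_le_tauG g x y
  set p := x^2+y^2+g^2 with hp
  have hgp : g ≤ p := by nlinarith [sq_nonneg x, sq_nonneg y]
  have hx : x^2 ≤ p := by nlinarith [sq_nonneg y, sq_nonneg g]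
  have hl : |-152*x^2 + 448*y^2 - 27*g^2 + 1848| ≤ 2400 * p := by
    rw [abs_le]; constructor <;> nlinarith [sq_nonneg x, sq_nonneg y]
  have h3 : g * |-152*x^2 + 448*y^2 - 27*g^2 + 1848| ≤ 2400 * p^2 := by
    calc _ ≤ p * (2400 * p) := by gcongr
      _ = _ := by ring
  have h4 : |tauE g x y| ≤ _ := abs_add_le _ _
  have h5 := mul_le_mul_of_nonneg_left h4 (by linarith : 0 ≤ g)
  nlinarith [sq_nonneg p]

lemma bound_tauE1 (g x y : ℝ) (hg : 1 ≤ g) : g * |tauE1 g x y| ≤ 1000 * tauG g x y := by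
  have h2 := six_sq_le_tauG g x y
  set p := x^2+y^2+g^2 with hp
  have hp1 : 1 ≤ p := by nlinarith [sq_nonneg x, sq_nonneg y]
  have hgx : |g*x| ≤ p := by
    rw [abs_le]; constructor <;> nlinarith [sq_nonneg (x-g), sq_nonneg (x+g), sq_nonneg y]
  have hq : |64*x^2 + 144*y^2 - 18*g^2 - 304| ≤ 500 * p := by
    rw [abs_le]; constructor <;> nlinarith [sq_nonneg x, sq_nonneg y]
  have e : g * |tauE1 g x y| = |(g*x) * (64*x^2 + 144*y^2 - 18*g^2 - 304) + (-2*g^4)| := by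
    rw [← abs_of_nonneg (by linarith : 0 ≤ g), ← abs_mul, abs_of_nonneg (by linarith : 0 ≤ g)]
    unfold tauE1
    ring_nf
  have h3 : |(g*x) * (64*x^2 + 144*y^2 - 18*g^2 - 304)| ≤ p * (500 * p) := by
    rw [abs_mul]; gcongr
  have h4 : |-2*g^4| ≤ 2 * p^2 := by
    have : (g^2)^2 ≤ p^2 := by
      gcongr; nlinarith [sq_nonneg x, sq_nonneg y]
    rw [abs_le]; constructor <;> nlinarith [sq_nonneg (g^2)]
  rw [e]
  refine (abs_add_le _ _).trans ?_
  nlinarith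

lemma bound_tauE2 (g x y : ℝ) (hg : 1 ≤ g) : g * |tauE2 g x y| ≤ 1000 * tauG g x y := by
  have h2 := six_sq_le_tauG g x y
  set p := x^2+y^2+g^2 with hp
  have hgp : g ≤ p := by nlinarith [sq_nonneg x, sq_nonneg y]
  have hl : |tauE2 g x y| ≤ 1000 * p := by
    unfold tauE2
    rw [abs_le]; constructor <;> nlinarith [sq_nonneg x, sq_nonneg y]
  have h3 : g * |tauE2 g x y| ≤ p * (1000 * p) := by gcongr
  nlinarith

/-- Stability of `2 ∂² ln`: if `g₁ = ∂G/G`, `g₂ = ∂²G/G`, and `e, e₁, e₂` are the perturbation of `G` and of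
its first two derivatives, each relative to `G`, then `2 ∂² ln G` moves by at most `200 δ`. -/
lemma u_sub_le {g1 g2 e e1 e2 δ : ℝ} (hδ : δ ≤ 1/2) (h1 : |g1| ≤ 3) (h2 : |g2| ≤ 8)
    (he : |e| ≤ δ) (he1 : |e1| ≤ δ) (he2 : |e2| ≤ δ) :
    |2 * ((1+e)*(g2+e2) - (g1+e1)^2) / (1+e)^2 - 2*(g2 - g1^2)| ≤ 200 * δ := by
  have hd : 0 ≤ δ := (abs_nonneg e).trans he
  have hpos : 1/2 ≤ 1 + e := by linarith [(abs_le.mp he).1]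
  have hpos' : 0 < 1 + e := by linarith
  have ha : |(e2 - g2*e)/(1+e)| ≤ 18*δ := by
    rw [abs_div, abs_of_pos hpos', div_le_iff₀ hpos']
    have : |e2 - g2*e| ≤ δ + 8*δ := by
      refine (abs_sub _ _).trans ?_
      rw [abs_mul]; gcongr
    nlinarith
  have hb : |(e1 - g1*e)/(1+e)| ≤ 8*δ := by
    rw [abs_div, abs_of_pos hpos', div_le_iff₀ hpos']
    have : |e1 - g1*e| ≤ δ + 3*δ := by
      refine (abs_sub _ _).trans ?_
      rw [abs_mul]; gcongr
    nlinarith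
  have e : 2 * ((1+e)*(g2+e2) - (g1+e1)^2) / (1+e)^2 - 2*(g2 - g1^2) =
      2*((e2 - g2*e)/(1+e)) - 2*((e1 - g1*e)/(1+e) * ((e1 - g1*e)/(1+e) + 2*g1)) := by
    field_simp
    ring
  rw [e]
  set a := (e2 - g2*_)/_
  set b := (e1 - g1*_)/_
  have hb2 : |b * (b + 2*g1)| ≤ 8*δ*10 := by
    rw [abs_mul]
    have : |b + 2*g1| ≤ 10 := by
      refine (abs_add_le _ _).trans ?_
      rw [abs_mul, abs_two]; linarith
    gcongr
  have := abs_le.mp ha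
  have := abs_le.mp hb2
  rw [abs_le]; constructor <;> linarith

/-- The logarithmic derivative of `t² + c² + 3` is at most `1` in absolute value. -/
lemma abs_two_mul_div_le (t c : ℝ) : |2*t/(t^2+c^2+3)| ≤ 1 := by
  have : 0 < t^2+c^2+3 := by positivity
  rw [abs_div, abs_of_pos this, div_le_one this, abs_le]
  constructor <;> nlinarith [sq_nonneg (t-1), sq_nonneg (t+1), sq_nonneg c]

lemma two_div_le (t c : ℝ) : |2/(t^2+c^2+3)| ≤ 2/3 := by
  rw [abs_of_nonneg (by positivity)]
  gcongr
  nlinarith [sq_nonneg t, sq_nonneg c]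

lemma lump_eq (t c : ℝ) :
    lump t c = 2 * (2/(t^2+c^2+3) - (2*t/(t^2+c^2+3))^2) := by
  have : t^2+c^2+3 ≠ 0 := by positivity
  unfold lump
  field_simp
  ring

/-- The quantitative form, valid for any `k` with `k² = 3`: the uniform error is `O(1/γ)`. -/
lemma main_bound (g k x y : ℝ) (hk : k^2 = 3) (hg : 2000 ≤ g) :
    |u0B (2*g^3) x y - lump (x - -g) (y - 0) - lump (x - g/2) (y - -(k*g)/2)
      - lump (x - g/2) (y - k*g/2)| ≤ 200000 / g := by
  have hg0 : 0 < g := by linarith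
  simp only [lump_eq]
  have hL1 := abs_two_mul_div_le (x - -g) (y - 0)
  have hL2 := abs_two_mul_div_le (x - g/2) (y - -(k*g)/2)
  have hL3 := abs_two_mul_div_le (x - g/2) (y - k*g/2)
  have hM1 := two_div_le (x - -g) (y - 0)
  have hM2 := two_div_le (x - g/2) (y - -(k*g)/2)
  have hM3 := two_div_le (x - g/2) (y - k*g/2)
  have p1 : 0 < (x - -g)^2 + (y - 0)^2 + 3 := by positivity
  have p2 : 0 < (x - g/2)^2 + (y - -(k*g)/2)^2 + 3 := by positivity
  have p3 : 0 < (x - g/2)^2 + (y - k*g/2)^2 + 3 := by positivity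
  have r1 : (x - -g)^2 + (y - 0)^2 + 3 = x^2+y^2+2*g*x+g^2+3 := by ring
  have r23 : ((x - g/2)^2 + (y - -(k*g)/2)^2 + 3) * ((x - g/2)^2 + (y - k*g/2)^2 + 3) =
      (x^2+y^2-g*x+g^2+3)^2 - 3*g^2*y^2 := by
    have s2 : (x - g/2)^2 + (y - -(k*g)/2)^2 + 3 = x^2+y^2-g*x+g^2+3 + k*g*y := by
      linear_combination g^2/4*hk
    have s3 : (x - g/2)^2 + (y - k*g/2)^2 + 3 = x^2+y^2-g*x+g^2+3 - k*g*y := by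
      linear_combination g^2/4*hk
    rw [s2, s3]
    linear_combination -g^2*y^2*hk
  have s23 : ((x - g/2)^2 + (y - -(k*g)/2)^2 + 3) + ((x - g/2)^2 + (y - k*g/2)^2 + 3) =
      2*(x^2+y^2-g*x+g^2+3) := by
    linear_combination g^2/2*hk
  generalize (x - -g)^2 + (y - 0)^2 + 3 = q1 at *
  generalize (x - g/2)^2 + (y - -(k*g)/2)^2 + 3 = q2 at *
  generalize (x - g/2)^2 + (y - k*g/2)^2 + 3 = q3 at *
  have hG : tauG g x y = q1*(q2*q3) := by
    rw [r1, r23]; unfold tauG; ring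
  have hGpos : 0 < tauG g x y := by rw [hG]; positivity
  have i1 : h0B (2*g^3) x y = tauG g x y + tauE g x y := by
    unfold h0B tauG tauE; ring
  have i2 : pdx (h0B (2*g^3)) x y =
      2*(x - -g)*(q2*q3) + q1*(2*(x-g/2))*(q2+q3) + tauE1 g x y := by
    rw [pdx_h0B, r23, s23, r1]; unfold tauE1; ring
  have i3 : pdx (pdx (h0B (2*g^3))) x y =
      2*(q2*q3) + 2*q1*(q2+q3)
        + 2*(2*(x - -g)*(2*(x-g/2))*(q2+q3) + (2*(x-g/2))^2*q1) + tauE2 g x y := by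
    rw [pdx_pdx_h0B, r23, s23, r1]; unfold tauE2; ring
  have hE : ∀ F : ℝ, g * |F| ≤ 1000 * tauG g x y → |F / tauG g x y| ≤ 1000/g := by
    intro F hF
    rw [abs_div, abs_of_pos hGpos, div_le_div_iff₀ hGpos hg0]
    linarith
  have b0 := hE _ (bound_tauE g x y (by linarith))
  have b1 := hE _ (bound_tauE1 g x y (by linarith))
  have b2 := hE _ (bound_tauE2 g x y (by linarith))
  have hδ : 1000/g ≤ 1/2 := by
    rw [div_le_div_iff₀ hg0 two_pos]; linarith
  obtain ⟨L1, hL1e⟩ : ∃ L, L = 2*(x - -g)/q1 := ⟨_, rfl⟩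
  obtain ⟨L2, hL2e⟩ : ∃ L, L = 2*(x - g/2)/q2 := ⟨_, rfl⟩
  obtain ⟨L3, hL3e⟩ : ∃ L, L = 2*(x - g/2)/q3 := ⟨_, rfl⟩
  obtain ⟨g1, hg1⟩ : ∃ t, t = L1 + L2 + L3 := ⟨_, rfl⟩
  obtain ⟨g2, hg2⟩ : ∃ t, t = 2/q1 + 2/q2 + 2/q3 + 2*(L1*L2 + L1*L3 + L2*L3) := ⟨_, rfl⟩
  rw [← hL1e] at hL1
  rw [← hL2e] at hL2
  rw [← hL3e] at hL3
  have hg1b : |g1| ≤ 3 := by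
    rw [hg1]
    linarith [abs_add_le (L1 + L2) L3, abs_add_le L1 L2]
  have hprod : ∀ a b : ℝ, |a| ≤ 1 → |b| ≤ 1 → |a*b| ≤ 1 := fun a b ha hb => by
    rw [abs_mul]; exact mul_le_one₀ ha (abs_nonneg b) hb
  have hg2b : |g2| ≤ 8 := by
    have c1 := abs_le.mp (hprod _ _ hL1 hL2)
    have c2 := abs_le.mp (hprod _ _ hL1 hL3)
    have c3 := abs_le.mp (hprod _ _ hL2 hL3)
    have d1 := abs_le.mp hM1
    have d2 := abs_le.mp hM2
    have d3 := abs_le.mp hM3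
    rw [hg2, abs_le]
    constructor <;> linarith
  have fin := u_sub_le hδ hg1b hg2b b0 b1 b2
  have j1 : h0B (2*g^3) x y = tauG g x y * (1 + tauE g x y / tauG g x y) := by
    rw [i1]; field_simp
  have j2 : pdx (h0B (2*g^3)) x y = tauG g x y * (g1 + tauE1 g x y / tauG g x y) := by
    rw [i2, mul_add (tauG g x y), mul_div_cancel₀ _ hGpos.ne', hG, hg1, hL1e, hL2e, hL3e]
    field_simp
    ring
  have j3 : pdx (pdx (h0B (2*g^3))) x y =
      tauG g x y * (g2 + tauE2 g x y / tauG g x y) := by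
    rw [i3, mul_add (tauG g x y), mul_div_cancel₀ _ hGpos.ne', hG, hg2, hL1e, hL2e, hL3e]
    field_simp
    ring
  have hu : u0B (2*g^3) x y = 2 * ((1 + tauE g x y / tauG g x y)*(g2 + tauE2 g x y / tauG g x y)
      - (g1 + tauE1 g x y / tauG g x y)^2) / (1 + tauE g x y / tauG g x y)^2 := by
    unfold u0B
    rw [j1, j2, j3]
    generalize 1 + tauE g x y / tauG g x y = a
    generalize g2 + tauE2 g x y / tauG g x y = b
    generalize g1 + tauE1 g x y / tauG g x y = c
    have hne := hGpos.ne'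
    rw [show 2 * (tauG g x y * a * (tauG g x y * b) - (tauG g x y * c)^2) =
      (tauG g x y)^2 * (2 * (a*b - c^2)) by ring, mul_pow,
      mul_div_mul_left _ _ (pow_ne_zero 2 hne)]
  have hs : 2*(g2 - g1^2) = 2*(2/q1 - L1^2) + 2*(2/q2 - L2^2) + 2*(2/q3 - L3^2) := by
    rw [hg1, hg2]; ring
  rw [← hu, hs] at fin
  rw [← hL1e, ← hL2e, ← hL3e]
  calc _ = |u0B (2*g^3) x y
        - (2*(2/q1 - L1^2) + 2*(2/q2 - L2^2) + 2*(2/q3 - L3^2))| := by ring_nf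
    _ ≤ 200 * (1000/g) := fin
    _ = 200000/g := by ring

/-- as `B → +∞`, `u_{0,B}` converges uniformly on `ℝ²` to the sum of three
lumps centred at `P₁ = (−γ,0)`, `P₂ = (γ/2,−√3γ/2)`, `P₃ = (γ/2,√3γ/2)`,
where `γ = (B/2)^{1/3}`. -/
theorem u0B_splits_into_three_lumps :
    ∀ ε : ℝ, 0 < ε → ∃ B₀ : ℝ, ∀ B : ℝ, B₀ ≤ B → ∀ x y : ℝ,
      |u0B B x y
        - lump (x - (-((B/2) ^ ((1:ℝ)/3)))) (y - 0)
        - lump (x - ((B/2) ^ ((1:ℝ)/3))/2) (y - (-(Real.sqrt 3 * ((B/2) ^ ((1:ℝ)/3)))/2))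
        - lump (x - ((B/2) ^ ((1:ℝ)/3))/2) (y - (Real.sqrt 3 * ((B/2) ^ ((1:ℝ)/3)))/2)|
        ≤ ε := by
  intro ε hε
  have hM : 0 ≤ 2000 + 200000/ε := by positivity
  refine ⟨2*(2000 + 200000/ε)^3, fun B hB x y => ?_⟩
  have hB2 : (2000 + 200000/ε)^3 ≤ B/2 := by linarith
  have hB0 : 0 ≤ B/2 := (pow_nonneg hM 3).trans hB2
  obtain ⟨g, hgdef⟩ : ∃ g, g = (B/2) ^ ((1:ℝ)/3) := ⟨_, rfl⟩
  have hg3 : g^3 = B/2 := by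
    rw [hgdef, ← Real.rpow_natCast, ← Real.rpow_mul hB0]
    norm_num
  have hg0 : 0 ≤ g := hgdef ▸ Real.rpow_nonneg hB0 _
  have hgM : 2000 + 200000/ε ≤ g := by
    refine le_of_pow_le_pow_left₀ (n := 3) (by norm_num) hg0 ?_
    rw [hg3]; exact hB2
  have hq : 0 < 200000/ε := by positivity
  have hBg : B = 2*g^3 := by linarith
  rw [← hgdef, hBg]
  refine (main_bound g (Real.sqrt 3) x y (Real.sq_sqrt (by norm_num)) (by linarith)).trans ?_
  rw [div_le_iff₀ (by linarith), mul_comm, ← div_le_iff₀ hε]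
  linarith
end

section
/- Let z̃₁ = −1, z̃₂ = (1 + √3 i)/2, z̃₃ = (1 − √3 i)/2 in ℂ. Then for each j ∈ {1,2,3}, Σ_{k ≠ j} (z̃_j − z̃_k)^{−3} = 0; that is, the configuration (z̃₁, z̃₂, z̃₃) satisfies the balancing condition F_j(z̃₁, z̃₂, z̃₃) = 0 for j = 1, 2, 3. -/
open Complex

/-!
The three points form an equilateral triangle with side length `√3`. With `s = √3 i`, so that
`s² = -3`, the differences of the points are `±s`, `±(3 + s)/2` and `±(3 - s)/2`, and the cube of
each is `±3s`. At every vertex the two cubes are opposite, hence so are their inverses.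
-/

theorem zpow_neg_three_add_eq_zero {a b : ℂ} (h : a ^ 3 = -b ^ 3) :
    a ^ (-3 : ℤ) + b ^ (-3 : ℤ) = 0 := by
  have key (x : ℂ) : x ^ (-3 : ℤ) = (x ^ 3)⁻¹ := by
    rw [zpow_neg]
    norm_cast
  rw [key, key, h, inv_neg, neg_add_cancel]

/-- the configuration `z̃₁ = −1`, `z̃₂ = (1+√3i)/2`, `z̃₃ = (1−√3i)/2`
satisfies the balancing condition `Σ_{k ≠ j} (z̃_j − z̃_k)⁻³ = 0` for each `j`. -/
theorem balanced_configuration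
    (z : Fin 3 → ℂ)
    (hz : z = ![(-1 : ℂ), (1 + Real.sqrt 3 * I) / 2, (1 - Real.sqrt 3 * I) / 2]) :
    ∀ j : Fin 3, ∑ k ∈ Finset.univ.erase j, (z j - z k) ^ (-3 : ℤ) = 0 := by
  have hs : ((Real.sqrt 3 : ℂ) * I) ^ 2 = -3 := by
    rw [mul_pow, I_sq, ← ofReal_pow, Real.sq_sqrt (by norm_num)]
    norm_num
  generalize (Real.sqrt 3 : ℂ) * I = s at hs hz
  have h0 : z 0 = -1 := by simp [hz]
  have h1 : z 1 = (1 + s) / 2 := by simp [hz]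
  have h2 : z 2 = (1 - s) / 2 := by simp [hz]
  have e0 : (Finset.univ.erase 0 : Finset (Fin 3)) = {1, 2} := by decide
  have e1 : (Finset.univ.erase 1 : Finset (Fin 3)) = {0, 2} := by decide
  have e2 : (Finset.univ.erase 2 : Finset (Fin 3)) = {0, 1} := by decide
  rw [Fin.forall_fin_succ, Fin.forall_fin_two]
  refine ⟨?_, ?_, ?_⟩
  · rw [e0, Finset.sum_pair (by decide), h0, h1, h2]
    apply zpow_neg_three_add_eq_zero
    linear_combination (-9 / 4 : ℂ) * hs
  · change ∑ k ∈ Finset.univ.erase 1, (z 1 - z k) ^ (-3 : ℤ) = 0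
    rw [e1, Finset.sum_pair (by decide), h0, h1, h2]
    apply zpow_neg_three_add_eq_zero
    linear_combination (9 / 8 * s + 9 / 8 : ℂ) * hs
  · change ∑ k ∈ Finset.univ.erase 2, (z 2 - z k) ^ (-3 : ℤ) = 0
    rw [e2, Finset.sum_pair (by decide), h0, h1, h2]
    apply zpow_neg_three_add_eq_zero
    linear_combination (-9 / 8 * s + 9 / 8 : ℂ) * hs
end

section
/- Let z̃₁ = −1, z̃₂ = (1 + √3 i)/2, z̃₃ = (1 − √3 i)/2 in ℂ, and let M be the 3×3 complex matrix with entries M_{jj} = −3 Σ_{k ≠ j} (z̃_j − z̃_k)^{−4} and M_{jk} = 3 (z̃_j − z̃_k)^{−4} for j ≠ k (the Jacobian of the map (z₁,z₂,z₃) ↦ (F₁,F₂,F₃), F_j = Σ_{k≠j}(z_j − z_k)^{−3}, at (z̃₁,z̃₂,z̃₃)). Then the kernel {v ∈ ℂ³ : M v = 0} equals the ℂ-linear span of the two vectors b₁ = (1, 1, 1) and b₂ = (z̃₁, z̃₂, z̃₃). -/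
/-!
The three points are the roots of `x ^ 3 = -1`. If `l` is the third index, then
`z j + z k = -z l` and `z j * z k = z l ^ 2`, so `(z j - z k) ^ 2 = -3 * z l ^ 2` and
`(z j - z k) ^ (-4) = z j * z k / 9` for `j ≠ k` (`zpow_sub_eq`). Since `∑ l, z l = 0`, the diagonal
entries are `-(1/3) * z j * ∑_{l ≠ j} z l = z j * z j / 3`, so the Jacobian is the rank-one matrix
`(1/3) z zᵀ` and its kernel is the plane `∑ l, z l * v l = 0`. This plane contains
`(1, 1, 1)` and `z`, because `∑ z l = ∑ z l ^ 2 = 0`, and these span it: the coefficients of `v` are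
read off by pairing with `(1, 1, 1)` and with the conjugate of `z`.
-/

open Complex

/-- The nonreal root `w` satisfies `w ^ 2 = w - 1`, and the roots of `x ^ 3 = -1` are
`-1`, `w`, `1 - w`. -/
lemma exists_root_form (z : Fin 3 → ℂ)
    (hz : z = ![(-1 : ℂ), (1 + Real.sqrt 3 * I) / 2, (1 - Real.sqrt 3 * I) / 2]) :
    ∃ w : ℂ, w ^ 2 = w - 1 ∧ z = ![-1, w, 1 - w] := by
  have h3 : ((Real.sqrt 3 : ℝ) : ℂ) ^ 2 = 3 := by
    rw [← ofReal_pow, Real.sq_sqrt (by norm_num)]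
    norm_num
  refine ⟨(1 + Real.sqrt 3 * I) / 2, ?_, ?_⟩
  · linear_combination (I ^ 2 / 4) * h3 + (3 / 4) * I_sq
  · rw [hz, show (1 - Real.sqrt 3 * I) / 2 = 1 - (1 + Real.sqrt 3 * I) / 2 by ring]

lemma zpow_sub_eq {w : ℂ} (hw : w ^ 2 = w - 1) {j k : Fin 3} (hjk : j ≠ k) :
    ((![-1, w, 1 - w] : Fin 3 → ℂ) j - (![-1, w, 1 - w] : Fin 3 → ℂ) k) ^ (-4 : ℤ)
      = (![-1, w, 1 - w] : Fin 3 → ℂ) j * (![-1, w, 1 - w] : Fin 3 → ℂ) k / 9 := by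
  have inv_of {x y : ℂ} (h : y * x ^ 4 = 1) : x ^ (-4 : ℤ) = y := by
    rw [zpow_neg]
    exact (eq_inv_of_mul_eq_one_left h).symm
  apply inv_of
  -- Powers of `w` are reduced with `w ^ 3 = -1`, a consequence of `hw`.
  have h3 : w ^ 3 = -1 := by linear_combination (w + 1) * hw
  have h4 : w ^ 4 = -w := by linear_combination w * h3
  have h5 : w ^ 5 = -w ^ 2 := by linear_combination w ^ 2 * h3
  have h6 : w ^ 6 = 1 := by linear_combination (w ^ 3 - 1) * h3
  fin_cases j <;> fin_cases k <;> simp at hjk ⊢ <;> ring_nf <;>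
    simp only [h6, h5, h4, h3, hw] <;> ring

theorem kernel_of_jacobian
    (z : Fin 3 → ℂ)
    (hz : z = ![(-1 : ℂ), (1 + Real.sqrt 3 * I) / 2, (1 - Real.sqrt 3 * I) / 2])
    (M : Matrix (Fin 3) (Fin 3) ℂ)
    (hM : ∀ j k : Fin 3, M j k =
      if j = k then -3 * ∑ l ∈ Finset.univ.erase j, (z j - z l) ^ (-4 : ℤ)
      else 3 * (z j - z k) ^ (-4 : ℤ)) :
    ∀ v : Fin 3 → ℂ,
      M.mulVec v = 0 ↔ ∃ c₁ c₂ : ℂ, v = c₁ • (fun _ => (1 : ℂ)) + c₂ • z := by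
  obtain ⟨w, hw, rfl⟩ := exists_root_form z hz
  set z : Fin 3 → ℂ := ![-1, w, 1 - w] with hzdef
  have hsum : ∑ l, z l = 0 := by simp [hzdef, Fin.sum_univ_three]
  have hM' : ∀ j k, M j k = z j * z k / 3 := by
    intro j k
    rw [hM]
    split_ifs with h
    · subst h
      rw [Finset.sum_congr rfl fun l hl => zpow_sub_eq hw (Finset.ne_of_mem_erase hl).symm,
        ← Finset.sum_div, ← Finset.mul_sum]
      have := Finset.add_sum_erase Finset.univ z (Finset.mem_univ j)
      linear_combination (-(1 / 3) * z j) * (this.trans hsum)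
    · rw [zpow_sub_eq hw h]
      ring
  intro v
  have hker : M.mulVec v = 0 ↔ -v 0 + w * v 1 + (1 - w) * v 2 = 0 := by
    have hmul : ∀ j, M.mulVec v j = z j / 3 * (-v 0 + w * v 1 + (1 - w) * v 2) := by
      intro j
      simp only [Matrix.mulVec, dotProduct, Fin.sum_univ_three, hM']
      simp [hzdef]
      ring
    constructor
    · intro h
      have h0 := hmul 0
      rw [h] at h0
      simpa [hzdef] using h0
    · intro h
      ext j
      simp [hmul, h]
  rw [hker]
  constructor
  · intro h
    -- Pairings of `v` with `(1, 1, 1)` and with the conjugate `(-1, 1 - w, w)` of `z`; both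
    -- vectors have squared norm `3`.
    refine ⟨(v 0 + v 1 + v 2) / 3, (-v 0 + (1 - w) * v 1 + w * v 2) / 3, ?_⟩
    ext j
    fin_cases j
    · simp [hzdef]
      linear_combination (-1 / 3) * h
    · simp [hzdef]
      linear_combination (1 / 3) * (1 - w) * h + (2 * v 1 - 2 * v 2) / 3 * hw
    · simp [hzdef]
      linear_combination (1 / 3) * w * h + (2 * v 2 - 2 * v 1) / 3 * hw
  · rintro ⟨c₁, c₂, rfl⟩
    simp [hzdef]
    linear_combination 2 * c₂ * hw
end

section
/- Let U(x,y) = 4(y² − x² + 3)/(x² + y² + 3)² be the classical lump and define ω : ℝ² → ℝ by ω = ∂_x[24x(y² − 3)/(x² + y² + 3)²]. Then at every point of ℝ²: (i) ∂_x²(∂_x²ω − ω + 6Uω + 6U) − ∂_y²ω = 0 (i.e. L_U ω = −6U after applying ∂_x²), and (ii) ∂_x²(∂_x²(∂_xω) − ∂_xω + 6U∂_xω + 6∂_xU + 6ω∂_xU) − ∂_y²(∂_xω) = 0 (i.e. L_U[∂_xω] = −6∂_xU − 6(∂_xU)ω after applying ∂_x²). -/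
/-- The correction function `ω = ∂ₓ[24x(y² − 3)/(x² + y² + 3)²]`. -/
noncomputable def omegaFun : ℝ → ℝ → ℝ :=
  pdx (fun x y => 24 * x * (y^2 - 3) / (x^2 + y^2 + 3)^2)

open scoped ContDiff in
/-- Smoothness on the plane of a curried function of two real variables. -/
def SmoothTwo (f : ℝ → ℝ → ℝ) : Prop := ContDiff ℝ ∞ (fun p : ℝ × ℝ => f p.1 p.2)

namespace SmoothTwo

variable {f : ℝ → ℝ → ℝ}

theorem hasDerivAt_fst (hf : SmoothTwo f) (x y : ℝ) :
    HasDerivAt (fun t => f t y) (fderiv ℝ (fun p : ℝ × ℝ => f p.1 p.2) (x, y) (1, 0)) x :=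
  HasFDerivAt.comp_hasDerivAt (f := fun t => (t, y)) x
    (hf.differentiable (by simp) (x, y)).hasFDerivAt
    ((hasDerivAt_id x).prodMk (hasDerivAt_const x y))

theorem hasDerivAt_snd (hf : SmoothTwo f) (x y : ℝ) :
    HasDerivAt (fun t => f x t) (fderiv ℝ (fun p : ℝ × ℝ => f p.1 p.2) (x, y) (0, 1)) y :=
  HasFDerivAt.comp_hasDerivAt (f := fun t => (x, t)) y
    (hf.differentiable (by simp) (x, y)).hasFDerivAt
    ((hasDerivAt_const y x).prodMk (hasDerivAt_id y))

theorem pdx_eq (hf : SmoothTwo f) :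
    pdx f = fun x y => fderiv ℝ (fun p : ℝ × ℝ => f p.1 p.2) (x, y) (1, 0) := by
  funext x y
  exact (hf.hasDerivAt_fst x y).deriv

theorem pdy_eq (hf : SmoothTwo f) :
    pdy f = fun x y => fderiv ℝ (fun p : ℝ × ℝ => f p.1 p.2) (x, y) (0, 1) := by
  funext x y
  exact (hf.hasDerivAt_snd x y).deriv

theorem hasDerivAt_pdx (hf : SmoothTwo f) (x y : ℝ) :
    HasDerivAt (fun t => f t y) (pdx f x y) x :=
  (hf.hasDerivAt_fst x y).differentiableAt.hasDerivAt

theorem dx (hf : SmoothTwo f) : SmoothTwo (pdx f) := by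
  rw [hf.pdx_eq]
  exact (hf.fderiv_right (by simp)).clm_apply contDiff_const

theorem dy (hf : SmoothTwo f) : SmoothTwo (pdy f) := by
  rw [hf.pdy_eq]
  exact (hf.fderiv_right (by simp)).clm_apply contDiff_const

/-- Symmetry of the mixed second partial derivatives. -/
theorem comm (hf : SmoothTwo f) : pdx (pdy f) = pdy (pdx f) := by
  rw [hf.dy.pdx_eq, hf.dx.pdy_eq, hf.pdy_eq, hf.pdx_eq]
  funext x y
  have hd : DifferentiableAt ℝ (fderiv ℝ (fun p : ℝ × ℝ => f p.1 p.2)) (x, y) :=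
    (hf.fderiv_right (m := 1) (by norm_cast)).differentiable (by simp) (x, y)
  have hs : IsSymmSndFDerivAt ℝ (fun p : ℝ × ℝ => f p.1 p.2) (x, y) :=
    hf.contDiffAt.isSymmSndFDerivAt (by simp; norm_cast)
  have key : ∀ v : ℝ × ℝ, fderiv ℝ (fun p : ℝ × ℝ => fderiv ℝ (fun p : ℝ × ℝ => f p.1 p.2) p v)
      (x, y) = (fderiv ℝ (fderiv ℝ (fun p : ℝ × ℝ => f p.1 p.2)) (x, y)).flip v := by
    intro v
    rw [fderiv_clm_apply hd (differentiableAt_const v)]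
    ext <;> simp
  simp only [Prod.mk.eta, key, ContinuousLinearMap.flip_apply]
  exact hs _ _

theorem comm_yy (hf : SmoothTwo f) :
    pdx (pdy (pdy f)) = pdy (pdy (pdx f)) := by
  rw [hf.dy.comm, hf.comm]

end SmoothTwo

theorem smooth_quot {P : ℝ → ℝ → ℝ} (hP : SmoothTwo P) (n : ℕ) :
    SmoothTwo (fun x y => P x y / (x ^ 2 + y ^ 2 + 3) ^ n) := by
  unfold SmoothTwo at *
  refine hP.div (by fun_prop) fun p => ?_
  positivity

/-- The quotient rule in `x` over a power of `Q = x² + y² + 3`, with one factor `Q` cancelled. -/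
theorem pdx_quot {P P' : ℝ → ℝ → ℝ} (hP : ∀ x y, HasDerivAt (fun t => P t y) (P' x y) x) (n : ℕ) :
    pdx (fun x y => P x y / (x ^ 2 + y ^ 2 + 3) ^ (n + 1)) = fun x y =>
      (P' x y * (x ^ 2 + y ^ 2 + 3) - 2 * (n + 1) * x * P x y) / (x ^ 2 + y ^ 2 + 3) ^ (n + 2) := by
  funext x y
  have hQ : x ^ 2 + y ^ 2 + 3 ≠ 0 := by positivity
  have h1 : HasDerivAt (fun t : ℝ => t ^ 2 + y ^ 2 + 3) (2 * x) x := by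
    simpa using ((hasDerivAt_pow 2 x).add_const (y ^ 2)).add_const (3 : ℝ)
  refine ((hP x y).div (h1.pow (n + 1)) (pow_ne_zero _ hQ)).deriv.trans ?_
  simp only [Pi.pow_apply, Nat.add_sub_cancel, Nat.cast_add, Nat.cast_one]
  field_simp
  ring

/-- The quotient rule in `y` over a power of `Q = x² + y² + 3`, with one factor `Q` cancelled. -/
theorem pdy_quot {P P' : ℝ → ℝ → ℝ} (hP : ∀ x y, HasDerivAt (fun t => P x t) (P' x y) y) (n : ℕ) :
    pdy (fun x y => P x y / (x ^ 2 + y ^ 2 + 3) ^ (n + 1)) = fun x y =>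
      (P' x y * (x ^ 2 + y ^ 2 + 3) - 2 * (n + 1) * y * P x y) / (x ^ 2 + y ^ 2 + 3) ^ (n + 2) := by
  funext x y
  have hQ : x ^ 2 + y ^ 2 + 3 ≠ 0 := by positivity
  have h1 : HasDerivAt (fun t : ℝ => x ^ 2 + t ^ 2 + 3) (2 * y) y := by
    simpa using ((hasDerivAt_pow 2 y).const_add (x ^ 2)).add_const (3 : ℝ)
  refine ((hP x y).div (h1.pow (n + 1)) (pow_ne_zero _ hQ)).deriv.trans ?_
  simp only [Pi.pow_apply, Nat.add_sub_cancel, Nat.cast_add, Nat.cast_one]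
  field_simp
  ring

/-- The potential `G = -12 (y² - 3) / (x² + y² + 3)`, a second antiderivative of `ω` in `x`. The
exponent `0 + 1` puts it in the shape of the quotient rules `pdx_quot` and `pdy_quot`. -/
noncomputable def potential : ℝ → ℝ → ℝ :=
  fun x y => -12 * (y ^ 2 - 3) / (x ^ 2 + y ^ 2 + 3) ^ (0 + 1)

theorem smooth_potential : SmoothTwo potential :=
  smooth_quot (P := fun _ y => -12 * (y ^ 2 - 3)) (by unfold SmoothTwo; fun_prop) _

theorem smooth_lump : SmoothTwo lump :=
  smooth_quot (P := fun x y => 4 * (y ^ 2 - x ^ 2 + 3)) (by unfold SmoothTwo; fun_prop) 2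

theorem pdx_pdx_potential : pdx (pdx potential) = omegaFun := by
  unfold omegaFun potential
  rw [pdx_quot (P := fun _ y => -12 * (y ^ 2 - 3)) (P' := fun _ _ => 0)
    (fun x y => hasDerivAt_const _ _)]
  congr 1
  funext x y
  push_cast
  ring

theorem smooth_omega : SmoothTwo omegaFun :=
  pdx_pdx_potential ▸ smooth_potential.dx.dx

theorem omega_eq : omegaFun = fun x y =>
    24 * (y ^ 2 - 3) * (y ^ 2 + 3 - 3 * x ^ 2) / (x ^ 2 + y ^ 2 + 3) ^ (2 + 1) := by
  unfold omegaFun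
  rw [pdx_quot (n := 1) (P := fun x y => 24 * x * (y ^ 2 - 3)) (P' := fun _ y => 24 * (y ^ 2 - 3))
    (fun x y => by simpa using ((hasDerivAt_id x).const_mul 24).mul_const (y ^ 2 - 3))]
  funext x y
  push_cast
  ring

theorem pdx_omega : pdx omegaFun = fun x y =>
    288 * (y ^ 2 - 3) * (x ^ 3 - (y ^ 2 + 3) * x) / (x ^ 2 + y ^ 2 + 3) ^ (3 + 1) := by
  rw [omega_eq, pdx_quot (P := fun x y => 24 * (y ^ 2 - 3) * (y ^ 2 + 3 - 3 * x ^ 2))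
    (P' := fun x y => 24 * (y ^ 2 - 3) * (-(3 * (2 * x))))
    (fun x y => by simpa using
      (((hasDerivAt_pow 2 x).const_mul 3).const_sub (y ^ 2 + 3)).const_mul (24 * (y ^ 2 - 3)))]
  funext x y
  push_cast
  ring

theorem pdx_pdx_omega : pdx (pdx omegaFun) = fun x y =>
    288 * (y ^ 2 - 3) * (-5 * x ^ 4 + 10 * (y ^ 2 + 3) * x ^ 2 - (y ^ 2 + 3) ^ 2)
      / (x ^ 2 + y ^ 2 + 3) ^ 5 := by
  have hP : ∀ x y : ℝ, HasDerivAt (fun t => 288 * (y ^ 2 - 3) * (t ^ 3 - (y ^ 2 + 3) * t))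
      (288 * (y ^ 2 - 3) * (3 * x ^ 2 - (y ^ 2 + 3))) x := fun x y => by
    have h := ((hasDerivAt_pow 3 x).sub ((hasDerivAt_id x).const_mul (y ^ 2 + 3))).const_mul
      (288 * (y ^ 2 - 3))
    exact h.congr_deriv (by norm_num)
  rw [pdx_omega, pdx_quot (P := fun x y => 288 * (y ^ 2 - 3) * (x ^ 3 - (y ^ 2 + 3) * x))
    (P' := fun x y => 288 * (y ^ 2 - 3) * (3 * x ^ 2 - (y ^ 2 + 3))) hP]
  funext x y
  push_cast
  ring

theorem pdy_potential : pdy potential = fun x y =>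
    -24 * (x ^ 2 + 6) * y / (x ^ 2 + y ^ 2 + 3) ^ (1 + 1) := by
  unfold potential
  rw [pdy_quot (P := fun _ y => -12 * (y ^ 2 - 3)) (P' := fun _ y => -12 * (2 * y))
    (fun x y => by simpa using ((hasDerivAt_pow 2 y).sub_const 3).const_mul (-12))]
  funext x y
  push_cast
  ring

theorem pdy_pdy_potential : pdy (pdy potential) = fun x y =>
    -24 * (x ^ 2 + 6) * (x ^ 2 - 3 * y ^ 2 + 3) / (x ^ 2 + y ^ 2 + 3) ^ 3 := by
  rw [pdy_potential, pdy_quot (P := fun x y => -24 * (x ^ 2 + 6) * y)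
    (P' := fun x _ => -24 * (x ^ 2 + 6))
    (fun x y => hasDerivAt_const_mul (-24 * (x ^ 2 + 6)))]
  funext x y
  push_cast
  ring

/-- The equation `L_U ω = -6U` before applying `∂ₓ²`, with `G` in the role of `∂ₓ⁻²ω`. -/
theorem integrated_identity :
    (fun s t => pdx (pdx omegaFun) s t - omegaFun s t + 6 * lump s t * omegaFun s t
      + 6 * lump s t) = pdy (pdy potential) := by
  rw [pdx_pdx_omega, omega_eq, pdy_pdy_potential]
  funext x y
  have hQ : x ^ 2 + y ^ 2 + 3 ≠ 0 := by positivity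
  simp only [lump]
  field_simp
  ring

/-- The `x`-derivative of `integrated_identity`, expanded by the Leibniz rule. -/
theorem integrated_identity_deriv :
    (fun s t => pdx (pdx (pdx omegaFun)) s t - pdx omegaFun s t
      + 6 * lump s t * pdx omegaFun s t
      + 6 * pdx lump s t + 6 * omegaFun s t * pdx lump s t) = pdx (pdy (pdy potential)) := by
  rw [← integrated_identity]
  funext x y
  have hU := (smooth_lump.hasDerivAt_pdx x y).const_mul 6
  have hw := smooth_omega.hasDerivAt_pdx x y
  have hwxx := smooth_omega.dx.dx.hasDerivAt_pdx x y
  refine Eq.trans ?_ (((hwxx.sub hw).add (hU.mul hw)).add hU).deriv.symm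
  ring

/-- the local differential identities `L_U ω = −6U` and
`L_U[∂ₓω] = −6∂ₓU − 6(∂ₓU)ω` (after applying `∂ₓ²`), i.e.
(i) `∂ₓ²(∂ₓ²ω − ω + 6Uω + 6U) − ∂_y²ω = 0` and
(ii) `∂ₓ²(∂ₓ²(∂ₓω) − ∂ₓω + 6U∂ₓω + 6∂ₓU + 6ω∂ₓU) − ∂_y²(∂ₓω) = 0` at every point of `ℝ²`. -/
theorem omega_identities :
    (∀ x y : ℝ,
      pdx (pdx (fun s t =>
        pdx (pdx omegaFun) s t - omegaFun s t + 6 * lump s t * omegaFun s t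
          + 6 * lump s t)) x y
        - pdy (pdy omegaFun) x y = 0)
    ∧
    (∀ x y : ℝ,
      pdx (pdx (fun s t =>
        pdx (pdx (pdx omegaFun)) s t - pdx omegaFun s t
          + 6 * lump s t * pdx omegaFun s t
          + 6 * pdx lump s t + 6 * omegaFun s t * pdx lump s t)) x y
        - pdy (pdy (pdx omegaFun)) x y = 0) := by
  refine ⟨fun x y => ?_, fun x y => ?_⟩
  · rw [integrated_identity, smooth_potential.comm_yy, smooth_potential.dx.comm_yy,
      pdx_pdx_potential, sub_self]
  · rw [integrated_identity_deriv, smooth_potential.comm_yy, smooth_potential.dx.comm_yy,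
      pdx_pdx_potential, smooth_omega.comm_yy, sub_self]
end
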